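/- Let f = x⁴ − 4x²y² + y⁴ − 4x²z² − 2y²z² + z⁴ ∈ ℝ[x,y,z] and define the Hermitian 4×4 complex matrices M₁ = (1/8)·[[14, 0, 2i, 0], [0, 1, 0, −i], [−2i, 0, 1, i], [0, i, −i, 4]], M₂ = (1/8)·[[0, 0, −2, 2i], [0, 0, 0, 2], [−2, 0, 0, 0], [−2i, 2, 0, 0]], and M₃ = (1/8)·[[0, 2, 0, −2i], [2, 0, 0, 0], [0, 0, 0, −2], [2i, 0, −2, 0]]. Then det(xM₁ + yM₂ + zM₃) = (1/256)·f as polynomials in ℂ[x,y,z], and the matrix M₁ = 1·M₁ + 0·M₂ + 0·M₃ is positive definite; consequently f is hyperbolic with respect to e = (1, 0, 0). -/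

import Mathlib

open scoped ComplexOrder

/-- The complexification of a real polynomial in three variables. -/
noncomputable def complexify (f : MvPolynomial (Fin 3) ℝ) : MvPolynomial (Fin 3) ℂ :=
  MvPolynomial.map (algebraMap ℝ ℂ) f

/-- `f` is hyperbolic with respect to `e ∈ ℝ³`: `f(e) ≠ 0` and for every `p ∈ ℝ³` all
complex roots of `t ↦ f(te + p)` are real. -/
def IsHyperbolic (f : MvPolynomial (Fin 3) ℝ) (e : Fin 3 → ℝ) : Prop :=
  MvPolynomial.eval e f ≠ 0 ∧
    ∀ p : Fin 3 → ℝ, ∀ t : ℂ,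
      MvPolynomial.eval (fun i => t * (e i : ℂ) + (p i : ℂ)) (complexify f) = 0 →
      t.im = 0

/-- The Hermitian pencil `x M₁ + y M₂ + z M₃` as a matrix of polynomials in `ℂ[x,y,z]`. -/
noncomputable def pencil {d : ℕ} (M₁ M₂ M₃ : Matrix (Fin d) (Fin d) ℂ) :
    Matrix (Fin d) (Fin d) (MvPolynomial (Fin 3) ℂ) := fun i j =>
  MvPolynomial.X 0 * MvPolynomial.C (M₁ i j) +
    MvPolynomial.X 1 * MvPolynomial.C (M₂ i j) +
    MvPolynomial.X 2 * MvPolynomial.C (M₃ i j)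

/-- The hyperbolic quartic `x⁴ - 4x²y² + y⁴ - 4x²z² - 2y²z² + z⁴`. -/
noncomputable def quartic : MvPolynomial (Fin 3) ℝ :=
  MvPolynomial.X 0 ^ 4 - 4 * MvPolynomial.X 0 ^ 2 * MvPolynomial.X 1 ^ 2 +
    MvPolynomial.X 1 ^ 4 - 4 * MvPolynomial.X 0 ^ 2 * MvPolynomial.X 2 ^ 2 -
    2 * MvPolynomial.X 1 ^ 2 * MvPolynomial.X 2 ^ 2 + MvPolynomial.X 2 ^ 4

noncomputable def Mx : Matrix (Fin 4) (Fin 4) ℂ :=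
  (1 / 8 : ℂ) • !![14, 0, 2 * Complex.I, 0;
                   0, 1, 0, -Complex.I;
                   -2 * Complex.I, 0, 1, Complex.I;
                   0, Complex.I, -Complex.I, 4]

noncomputable def My : Matrix (Fin 4) (Fin 4) ℂ :=
  (1 / 8 : ℂ) • !![0, 0, -2, 2 * Complex.I;
                   0, 0, 0, 2;
                   -2, 0, 0, 0;
                   -2 * Complex.I, 2, 0, 0]

noncomputable def Mz : Matrix (Fin 4) (Fin 4) ℂ :=
  (1 / 8 : ℂ) • !![0, 2, 0, -2 * Complex.I;
                   2, 0, 0, 0;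
                   0, 0, 0, -2;
                   2 * Complex.I, 0, -2, 0]

/-!
If `A` is positive definite, `B` is Hermitian and `(t A + B) v = 0` with `v ≠ 0`, then
`t (v* A v) = -(v* B v)` with `v* A v > 0` and `v* B v` real, so `t` is real. Hence a polynomial
with a Hermitian determinantal representation that is positive definite at `e` is hyperbolic with
respect to `e`. For the quartic, the determinant is expanded directly, and positivity of `Mx`
follows by completing squares:
`8 v* Mx v = 8 |v₀|² + |v₁ - i v₃|² + |v₂ + i v₃ - 2 i v₀|² + 2 |v₀ + v₃|²`.
-/

open Matrix MvPolynomial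

theorem im_eq_zero_of_det_smul_add_eq_zero {𝕜 n : Type*} [RCLike 𝕜] [Fintype n] [DecidableEq n]
    {A B : Matrix n n 𝕜} (hA : A.PosDef) (hB : B.IsHermitian) {t : 𝕜}
    (hdet : (t • A + B).det = 0) : RCLike.im t = 0 := by
  obtain ⟨v, hv, hker⟩ := exists_mulVec_eq_zero_iff.mpr hdet
  have hform : t * (star v ⬝ᵥ A *ᵥ v) + star v ⬝ᵥ B *ᵥ v = 0 := by
    simpa [add_mulVec, smul_mulVec] using congrArg (star v ⬝ᵥ ·) hker
  have him : RCLike.im t * RCLike.re (star v ⬝ᵥ A *ᵥ v) = 0 := by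
    simpa [hA.isHermitian.im_star_dotProduct_mulVec_self, hB.im_star_dotProduct_mulVec_self]
      using congrArg RCLike.im hform
  exact (mul_eq_zero.mp him).resolve_right (hA.re_dotProduct_pos hv).ne'

theorem isHermitian_real_linear_combination {n : Type*} {M₁ M₂ M₃ : Matrix n n ℂ}
    (h₁ : M₁.IsHermitian) (h₂ : M₂.IsHermitian) (h₃ : M₃.IsHermitian) (p : Fin 3 → ℝ) :
    ((p 0 : ℂ) • M₁ + (p 1 : ℂ) • M₂ + (p 2 : ℂ) • M₃).IsHermitian := by
  have isSelfAdjoint_ofReal (r : ℝ) : IsSelfAdjoint (r : ℂ) := Complex.conj_ofReal r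
  exact ((h₁.smul (isSelfAdjoint_ofReal _)).add (h₂.smul (isSelfAdjoint_ofReal _))).add
    (h₃.smul (isSelfAdjoint_ofReal _))

theorem det_fin_four {R : Type*} [CommRing R] (A : Matrix (Fin 4) (Fin 4) R) :
    A.det =
      A 0 0 * !![A 1 1, A 1 2, A 1 3; A 2 1, A 2 2, A 2 3; A 3 1, A 3 2, A 3 3].det -
        A 0 1 * !![A 1 0, A 1 2, A 1 3; A 2 0, A 2 2, A 2 3; A 3 0, A 3 2, A 3 3].det +
        A 0 2 * !![A 1 0, A 1 1, A 1 3; A 2 0, A 2 1, A 2 3; A 3 0, A 3 1, A 3 3].det -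
        A 0 3 * !![A 1 0, A 1 1, A 1 2; A 2 0, A 2 1, A 2 2; A 3 0, A 3 1, A 3 2].det := by
  simp [det_succ_row_zero A, Fin.sum_univ_four, det_fin_three, Fin.succAbove, sub_eq_add_neg,
    pow_succ]

theorem eval_ofReal_complexify (f : MvPolynomial (Fin 3) ℝ) (e : Fin 3 → ℝ) :
    eval (fun i => (e i : ℂ)) (complexify f) = (eval e f : ℂ) := by
  rw [complexify, eval_map]
  exact (eval₂_comp_left (algebraMap ℝ ℂ) (RingHom.id ℝ) e f).symm

section Pencil

variable {d : ℕ} (M₁ M₂ M₃ : Matrix (Fin d) (Fin d) ℂ)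

theorem pencil_map_eval (v : Fin 3 → ℂ) :
    (pencil M₁ M₂ M₃).map (eval v) = v 0 • M₁ + v 1 • M₂ + v 2 • M₃ := by
  ext i j
  simp [pencil]

theorem eval_det_pencil (v : Fin 3 → ℂ) :
    eval v (pencil M₁ M₂ M₃).det = (v 0 • M₁ + v 1 • M₂ + v 2 • M₃).det := by
  rw [RingHom.map_det, RingHom.mapMatrix_apply, pencil_map_eval]

variable {M₁ M₂ M₃} in
theorem isHyperbolic_of_det_pencil_eq (h₁ : M₁.IsHermitian) (h₂ : M₂.IsHermitian)
    (h₃ : M₃.IsHermitian) {f : MvPolynomial (Fin 3) ℝ} {c : ℂ}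
    (hdet : (pencil M₁ M₂ M₃).det = C c * complexify f) {e : Fin 3 → ℝ}
    (hpos : ((e 0 : ℂ) • M₁ + (e 1 : ℂ) • M₂ + (e 2 : ℂ) • M₃).PosDef) :
    IsHyperbolic f e := by
  have heval (v : Fin 3 → ℂ) :
      (v 0 • M₁ + v 1 • M₂ + v 2 • M₃).det = c * eval v (complexify f) := by
    rw [← eval_det_pencil, hdet, eval_mul, eval_C]
  refine ⟨fun hf => hpos.det_pos.ne' ?_, fun p t ht => ?_⟩
  · rw [heval fun i => (e i : ℂ), eval_ofReal_complexify, hf, Complex.ofReal_zero, mul_zero]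
  · refine im_eq_zero_of_det_smul_add_eq_zero hpos
      (isHermitian_real_linear_combination h₁ h₂ h₃ p) ?_
    calc (t • ((e 0 : ℂ) • M₁ + (e 1 : ℂ) • M₂ + (e 2 : ℂ) • M₃) +
            ((p 0 : ℂ) • M₁ + (p 1 : ℂ) • M₂ + (p 2 : ℂ) • M₃)).det
        = ((t * e 0 + p 0) • M₁ + (t * e 1 + p 1) • M₂ + (t * e 2 + p 2) • M₃).det := by
          congr 1
          module
      _ = c * eval (fun i => t * (e i : ℂ) + (p i : ℂ)) (complexify f) :=
          heval fun i => t * (e i : ℂ) + (p i : ℂ)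
      _ = 0 := by rw [ht, mul_zero]

end Pencil

theorem det_pencil_Mx_My_Mz :
    (pencil Mx My Mz).det = C (1 / 256 : ℂ) * complexify quartic := by
  refine MvPolynomial.funext fun v => ?_
  have hquartic : eval v (complexify quartic) =
      v 0 ^ 4 - 4 * v 0 ^ 2 * v 1 ^ 2 + v 1 ^ 4 - 4 * v 0 ^ 2 * v 2 ^ 2 -
        2 * v 1 ^ 2 * v 2 ^ 2 + v 2 ^ 4 := by
    simp [complexify, quartic]
  have hcomb : v 0 • Mx + v 1 • My + v 2 • Mz = (1 / 8 : ℂ) •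
      !![14 * v 0, 2 * v 2, 2 * Complex.I * v 0 - 2 * v 1, 2 * Complex.I * (v 1 - v 2);
         2 * v 2, v 0, 0, 2 * v 1 - Complex.I * v 0;
         -2 * Complex.I * v 0 - 2 * v 1, 0, v 0, Complex.I * v 0 - 2 * v 2;
         -2 * Complex.I * (v 1 - v 2), 2 * v 1 + Complex.I * v 0,
           -Complex.I * v 0 - 2 * v 2, 4 * v 0] := by
    ext i j
    fin_cases i <;> fin_cases j <;> simp [Mx, My, Mz] <;> ring
  rw [eval_det_pencil, hcomb, eval_mul, eval_C, hquartic, det_smul]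
  simp only [det_fin_four, det_fin_three, of_apply, cons_val, Fintype.card_fin]
  grind [Complex.I_sq]

/-- The invertible matrix whose rows are the linear forms `v₀`, `v₁ - i v₃`,
`v₂ + i v₃ - 2 i v₀` and `v₀ + v₃` in the decomposition of `v* Mx v` into squares. -/
noncomputable def squareForms : Matrix (Fin 4) (Fin 4) ℂ :=
  !![1, 0, 0, 0;
     0, 1, 0, -Complex.I;
     -2 * Complex.I, 0, 1, Complex.I;
     1, 0, 0, 1]

theorem det_squareForms : squareForms.det = 1 := by
  simp [squareForms, det_fin_four, det_fin_three]

theorem Mx_eq_conjTranspose_mul_diagonal_mul :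
    Mx = squareFormsᴴ * diagonal ![1, 1 / 8, 1 / 8, 1 / 4] * squareForms := by
  ext i j
  fin_cases i <;> fin_cases j <;>
    simp [Mx, squareForms, mul_apply, Fin.sum_univ_succ, diagonal, map_ofNat] <;>
    grind [Complex.I_sq]

theorem posDef_Mx : Mx.PosDef := by
  rw [Mx_eq_conjTranspose_mul_diagonal_mul]
  have hinj : Function.Injective squareForms.mulVec :=
    mulVec_injective_of_isUnit <| (isUnit_iff_isUnit_det _).mpr (by simp [det_squareForms])
  refine PosDef.conjTranspose_mul_mul_same (PosDef.diagonal fun i => ?_) hinj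
  fin_cases i <;> simp

theorem isHermitian_My : My.IsHermitian := by
  ext i j
  fin_cases i <;> fin_cases j <;> simp [My]

theorem isHermitian_Mz : Mz.IsHermitian := by
  ext i j
  fin_cases i <;> fin_cases j <;> simp [Mz]

/-- The explicit Hermitian matrices `Mx, My, Mz` give a definite
determinantal representation `det (x Mx + y My + z Mz) = (1/256) f` of the quartic
`f = x⁴ - 4x²y² + y⁴ - 4x²z² - 2y²z² + z⁴`, with `Mx = 1·Mx + 0·My + 0·Mz` positive
definite; consequently `f` is hyperbolic with respect to `e = (1,0,0)`. -/
theorem quartic_determinantal_representation :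
    (pencil Mx My Mz).det = MvPolynomial.C (1 / 256 : ℂ) * complexify quartic ∧
    Mx.PosDef ∧ IsHyperbolic quartic ![1, 0, 0] :=
  ⟨det_pencil_Mx_My_Mz, posDef_Mx,
    isHyperbolic_of_det_pencil_eq posDef_Mx.isHermitian isHermitian_My isHermitian_Mz
      det_pencil_Mx_My_Mz (by simpa using posDef_Mx)⟩
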